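/- Assume μ is a martingale measure. Let h* ∈ H be the minimizer of Σ_{n=1}^N E_μ[|(ᵒ𝔻f)_n − h_n|_*^q] over the set H of predictable processes with ‖h‖_{L^q(μ)} < ∞, set ρ = ‖ᵒ𝔻f − h*‖_{L^q(μ)}, let v(e) = (e_1 |e_1|^{q−2}, …, e_d |e_d|^{q−2}) and Φ_n = v((ᵒ𝔻f)_n − h*_n), and fix u > 0. For δ > 0 let π_δ = (Id, Id + u δ Δ^{−1} ∘ Φ)_# μ. Then: (a) E_μ[Φ_n | F_{n−1}] = 0 μ-a.s. for every n, and consequently the second marginal of π_δ is a martingale measure; (b) E_{π_δ}[c_N(X, Y)] = u^p ρ^q δ^p; (c) lim_{δ→0+} E_{π_δ}[f(Y) − f(X)]/δ = u ρ^q. -/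

import Mathlib

open MeasureTheory Filter Set
open scoped ENNReal

noncomputable section

/-- Discrete path space `X = (ℝ^d)^N`. -/
abbrev PathD (N d : ℕ) : Type := Fin N → Fin d → ℝ

/-- The `ℓ_e` norm on `ℝ^d`. -/
def lpnorm {d : ℕ} (e : ℝ) (v : Fin d → ℝ) : ℝ := (∑ i, |v i| ^ e) ^ (1 / e)

/-- Coordinate `x_n` of a path, with the convention `x_0 = 0` (and `x_n = 0` for `n > N`). -/
def coord {N d : ℕ} (x : PathD N d) (n : ℕ) : Fin d → ℝ :=
  if h : 1 ≤ n ∧ n ≤ N then x ⟨n - 1, by omega⟩ else 0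

/-- The cost `c_N(x,y) = Σ_{n=1}^N |Δx_n − Δy_n|^p` (with `|·|` the `ℓ_p` norm). -/
def cN {N d : ℕ} (p : ℝ) (x y : PathD N d) : ℝ :=
  ∑ n ∈ Finset.Icc 1 N,
    lpnorm p ((coord x n - coord x (n - 1)) - (coord y n - coord y (n - 1))) ^ p

/-- The σ-algebra `F_n = σ(x_1, …, x_n)` on the discrete path space. -/
def Fn (N d n : ℕ) : MeasurableSpace (PathD N d) :=
  MeasurableSpace.comap (fun x (i : Fin N) => if (i : ℕ) + 1 ≤ n then x i else 0) inferInstance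

/-- Conditional independence of `m₁` and `m₂` given `m'` under `π`, expressed through
conditional expectations of indicators. -/
def CondIndepOn {Ω : Type*} [MeasurableSpace Ω] (π : Measure Ω)
    (m' m₁ m₂ : MeasurableSpace Ω) : Prop :=
  ∀ A B : Set Ω, MeasurableSet[m₁] A → MeasurableSet[m₂] B →
    (π[(A ∩ B).indicator (fun _ => (1 : ℝ)) | m']) =ᵐ[π]
      (π[A.indicator (fun _ => (1 : ℝ)) | m']) * (π[B.indicator (fun _ => (1 : ℝ)) | m'])

/-- `π` is a coupling with first marginal `μ` which is causal to its second marginal: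
for every `n`, `σ(Y_1,…,Y_n)` is conditionally independent of `σ(X_1,…,X_N)` given `F_n`. -/
def IsCausalStar {N d : ℕ} (μ : Measure (PathD N d))
    (π : Measure (PathD N d × PathD N d)) : Prop :=
  π.map Prod.fst = μ ∧
  ∀ n : ℕ, CondIndepOn π ((Fn N d n).comap Prod.fst)
    ((Fn N d n).comap Prod.snd) ((Fn N d N).comap Prod.fst)

/-- `π` is a causal coupling of `(μ, ν)`. -/
def IsCausalCoupling {N d : ℕ} (μ ν : Measure (PathD N d))
    (π : Measure (PathD N d × PathD N d)) : Prop :=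
  π.map Prod.snd = ν ∧ IsCausalStar μ π

/-- `π` is a bicausal coupling of `(μ, ν)`: both `π` and its swap are causal. -/
def IsBicausalCoupling {N d : ℕ} (μ ν : Measure (PathD N d))
    (π : Measure (PathD N d × PathD N d)) : Prop :=
  IsCausalCoupling μ ν π ∧
  (∀ n : ℕ, CondIndepOn π ((Fn N d n).comap Prod.snd)
    ((Fn N d n).comap Prod.fst) ((Fn N d N).comap Prod.snd))

/-- `μ` is a martingale measure on the discrete path space: every coordinate is integrable
and `E_μ[X_n | F_{n−1}] = X_{n−1}` a.s. (with `X_0 = 0`). -/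
def IsMartingaleMeasure {N d : ℕ} (μ : Measure (PathD N d)) : Prop :=
  ∀ n : ℕ, 1 ≤ n → n ≤ N →
    Integrable (fun x => coord x n) μ ∧
    (μ[(fun x => coord x n) | Fn N d (n - 1)]) =ᵐ[μ] (fun x => coord x (n - 1))


/-- The discrete pathwise Malliavin derivative `𝔻_n f = Σ_{k=n}^N ∂_k f`, where `∂_k f` is the
`ℝ^d`-valued partial gradient of `f` in the `k`-th coordinate block (`k = 1, …, N`). -/
def Dn {N d : ℕ} (f : PathD N d → ℝ) (n : ℕ) (x : PathD N d) : Fin d → ℝ :=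
  fun j => ∑ k : Fin N, if n ≤ (k : ℕ) + 1 then
    fderiv ℝ f x (Pi.single k (Pi.single j 1)) else 0

/-- Standing assumptions on the penalty function `L : [0,∞) → [0,∞]`:
continuous, non-decreasing, `L(0) = 0` and `liminf_{u→∞} L(u)/u^p = +∞`. -/
structure PenaltyAssumptions (p : ℝ) (L : ℝ → ℝ≥0∞) : Prop where
  cont : ContinuousOn L (Set.Ici 0)
  mono : MonotoneOn L (Set.Ici 0)
  zero : L 0 = 0
  growth : Tendsto (fun u : ℝ => L u / ENNReal.ofReal (u ^ p)) atTop (nhds ⊤)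

/-- The convex conjugate `L*(v) = sup_{u ≥ 0} { u v − L(u) }`, valued in the extended reals. -/
def Lconj (L : ℝ → ℝ≥0∞) (v : ℝ) : EReal :=
  ⨆ u : {u : ℝ // 0 ≤ u}, ((u.1 * v : ℝ) : EReal) - ((L u.1 : ℝ≥0∞) : EReal)

/-- The expected transport cost `E_π[c_N(X,Y)]` of a coupling. -/
def costD {N d : ℕ} (p : ℝ) (π : Measure (PathD N d × PathD N d)) : ℝ :=
  ∫ z, cN p z.1 z.2 ∂π

/-- The penalised causal DRO value
`V(δ) = sup_{π ∈ Π_c(μ,*), E_π[c_N] < ∞} { E_π[f(Y)] − δ L(E_π[c_N(X,Y)]^{1/p}/δ) }`,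
valued in the extended reals. -/
def VD {N d : ℕ} (p : ℝ) (L : ℝ → ℝ≥0∞) (μ : Measure (PathD N d))
    (f : PathD N d → ℝ) (δ : ℝ) : EReal :=
  ⨆ π : {π : Measure (PathD N d × PathD N d) //
      IsProbabilityMeasure π ∧ IsCausalStar μ π ∧
      Integrable (fun z => cN p z.1 z.2) π},
    ((∫ z, f z.2 ∂π.1 : ℝ) : EReal) -
      ((ENNReal.ofReal δ * L ((costD p π.1) ^ (1 / p) / δ) : ℝ≥0∞) : EReal)

/-- The `L^q(μ)`-norm `(Σ_{n=1}^N E_μ[|E_μ[𝔻_n f(X)|F_n]|_*^q])^{1/q}` of the optional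
projection of the discrete pathwise Malliavin derivative. -/
def optionalNorm {N d : ℕ} (q : ℝ) (μ : Measure (PathD N d)) (f : PathD N d → ℝ) : ℝ :=
  (∑ n ∈ Finset.Icc 1 N, ∫ x, lpnorm q ((μ[Dn f n | Fn N d n]) x) ^ q ∂μ) ^ (1 / q)

/-- The map `v(e) = (e_1|e_1|^{q−2}, …, e_d|e_d|^{q−2})` on `ℝ^d`. -/
def vmap {d : ℕ} (q : ℝ) (e : Fin d → ℝ) : Fin d → ℝ :=
  fun i => e i * |e i| ^ (q - 2)

/-- The inverse `Δ^{-1}` of the increment map: `(Δ^{-1} y)_n = Σ_{k=1}^n y_k`. -/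
def DeltaInv {N d : ℕ} (y : PathD N d) : PathD N d :=
  fun i => ∑ k : Fin N, if (k : ℕ) ≤ (i : ℕ) then y k else 0

/-- A process `h = (h_n)_{n=1}^N` is predictable if `h_n` is `F_{n−1}`-measurable. -/
def IsPredictable {N d : ℕ} (h : ℕ → PathD N d → Fin d → ℝ) : Prop :=
  ∀ n : ℕ, 1 ≤ n → n ≤ N → Measurable[Fn N d (n - 1)] (h n)

end

open MeasureTheory Filter
open scoped Matrix Topology

/-!
Changing `h*` at a single time keeps it predictable, so its minimality says that each residual
`Z_n = (ᵒ𝔻f)_n - h*_n` is, in `L^q(μ)`, orthogonal in the sense of Birkhoff to the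
`F_{n-1}`-measurable functions. The gradient of `e ↦ |e|_*^q` is `q v(e)`, so the first-order
condition is `E[v(Z_n) ⬝ᵥ g] = 0` for every such `g`, that is `E[Φ_n | F_{n-1}] = 0`; adding
multiples of `Φ` to the increments then preserves the martingale property. The cost follows from
`|v(e)|^p = |e|_*^q`. Finally, summation by parts turns the derivative of `E[f(X + c Δ^{-1} Φ)]` at
`c = 0` into `Σ_n E[𝔻_n f ⬝ᵥ Φ_n]`, where `𝔻_n f` may be replaced by `(ᵒ𝔻f)_n = Z_n + h*_n`
because `Φ_n` is `F_n`-measurable; the `h*_n` part vanishes by orthogonality and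
`Z_n ⬝ᵥ v(Z_n) = |Z_n|_*^q`.
-/

section DualityMap

variable {d : ℕ} {p q e : ℝ}

lemma lpnorm_nonneg (e : ℝ) (v : Fin d → ℝ) : 0 ≤ lpnorm e v :=
  Real.rpow_nonneg (Finset.sum_nonneg fun _ _ => Real.rpow_nonneg (abs_nonneg _) _) _

lemma lpnorm_rpow (he : e ≠ 0) (v : Fin d → ℝ) : lpnorm e v ^ e = ∑ i, |v i| ^ e := by
  rw [lpnorm, ← Real.rpow_mul (Finset.sum_nonneg fun _ _ => Real.rpow_nonneg (abs_nonneg _) _),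
    one_div_mul_cancel he, Real.rpow_one]

lemma norm_le_lpnorm (he : 0 < e) (v : Fin d → ℝ) : ‖v‖ ≤ lpnorm e v := by
  refine (pi_norm_le_iff_of_nonneg (lpnorm_nonneg e v)).2 fun i => ?_
  rw [← Real.rpow_le_rpow_iff (norm_nonneg _) (lpnorm_nonneg e v) he, lpnorm_rpow he.ne']
  exact Finset.single_le_sum (f := fun i => |v i| ^ e)
    (fun _ _ => Real.rpow_nonneg (abs_nonneg _) _) (Finset.mem_univ i)

lemma lpnorm_smul_rpow (he : e ≠ 0) (c : ℝ) (v : Fin d → ℝ) :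
    lpnorm e (c • v) ^ e = |c| ^ e * lpnorm e v ^ e := by
  simp only [lpnorm_rpow he, Pi.smul_apply, smul_eq_mul, abs_mul,
    Real.mul_rpow (abs_nonneg _) (abs_nonneg _), Finset.mul_sum]

lemma measurable_lpnorm (e : ℝ) : Measurable (lpnorm e : (Fin d → ℝ) → ℝ) := by
  unfold lpnorm
  fun_prop

lemma norm_dotProduct_le (v w : Fin d → ℝ) : ‖v ⬝ᵥ w‖ ≤ d * ‖v‖ * ‖w‖ :=
  calc ‖∑ i, v i * w i‖ ≤ ∑ _i : Fin d, ‖v‖ * ‖w‖ := norm_sum_le_of_le _ fun i _ => by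
        rw [norm_mul]
        gcongr
        exacts [norm_le_pi_norm v i, norm_le_pi_norm w i]
    _ = d * ‖v‖ * ‖w‖ := by
        rw [Finset.sum_const, Finset.card_univ, Fintype.card_fin, nsmul_eq_mul, mul_assoc]

lemma abs_vmap (hq : 1 < q) (v : Fin d → ℝ) (i : Fin d) : |vmap q v i| = |v i| ^ (q - 1) := by
  rw [vmap, abs_mul, abs_of_nonneg (Real.rpow_nonneg (abs_nonneg _) _),
    ← Real.rpow_one_add' (abs_nonneg _) (by linarith)]
  ring_nf

lemma norm_vmap_le (hq : 1 < q) (v : Fin d → ℝ) : ‖vmap q v‖ ≤ ‖v‖ ^ (q - 1) := by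
  have : 0 ≤ q - 1 := by linarith
  refine (pi_norm_le_iff_of_nonneg (by positivity)).2 fun i => ?_
  rw [Real.norm_eq_abs, abs_vmap hq]
  gcongr
  exact norm_le_pi_norm v i

lemma lpnorm_vmap_rpow (hpq : p.HolderConjugate q) (v : Fin d → ℝ) :
    lpnorm p (vmap q v) ^ p = lpnorm q v ^ q := by
  simp only [lpnorm_rpow hpq.ne_zero, lpnorm_rpow hpq.symm.ne_zero, abs_vmap hpq.symm.lt,
    ← Real.rpow_mul (abs_nonneg _), hpq.symm.sub_one_mul_conj]

lemma dotProduct_vmap_self (hq : 1 < q) (v : Fin d → ℝ) : v ⬝ᵥ vmap q v = lpnorm q v ^ q := by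
  rw [lpnorm_rpow (by linarith)]
  refine Finset.sum_congr rfl fun i _ => ?_
  rw [vmap, ← mul_assoc, ← abs_mul_abs_self, ← sq, ← Real.rpow_natCast, Nat.cast_ofNat,
    ← Real.rpow_add' (abs_nonneg _) (by linarith), add_sub_cancel]

lemma measurable_vmap (q : ℝ) : Measurable (vmap q : (Fin d → ℝ) → Fin d → ℝ) := by
  unfold vmap
  fun_prop

lemma hasFDerivAt_lpnorm_rpow (hq : 1 < q) (v : Fin d → ℝ) :
    HasFDerivAt (fun v : Fin d → ℝ => lpnorm q v ^ q)
      (q • (dotProductBilin ℝ ℝ).toContinuousBilinearMap (vmap q v)) v := by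
  simp only [lpnorm_rpow (zero_lt_one.trans hq).ne']
  have hcoord (i : Fin d) : HasFDerivAt (fun v : Fin d → ℝ => |v i| ^ q)
      ((q * |v i| ^ (q - 2) * v i) • ContinuousLinearMap.proj i) v :=
    HasDerivAt.comp_hasFDerivAt (h₂ := fun y => |y| ^ q) v (hasDerivAt_abs_rpow (v i) hq)
      (hasFDerivAt_apply (𝕜 := ℝ) i v)
  refine (HasFDerivAt.fun_sum fun i _ => hcoord i).congr_fderiv
    (ContinuousLinearMap.ext fun w => ?_)
  calc (∑ i, (q * |v i| ^ (q - 2) * v i) • ContinuousLinearMap.proj (R := ℝ) i) w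
      = ∑ i, q * |v i| ^ (q - 2) * v i * w i := by
        simp only [sum_apply]
        rfl
    _ = q * (vmap q v ⬝ᵥ w) := by
        rw [dotProduct, Finset.mul_sum]
        exact Finset.sum_congr rfl fun i _ => by rw [vmap]; ring

lemma norm_fderiv_lpnorm_rpow_le (hq : 1 < q) (v : Fin d → ℝ) :
    ‖fderiv ℝ (fun v : Fin d → ℝ => lpnorm q v ^ q) v‖ ≤ q * d * ‖v‖ ^ (q - 1) := by
  have hq0 : 0 < q := zero_lt_one.trans hq
  rw [(hasFDerivAt_lpnorm_rpow hq v).fderiv]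
  refine ContinuousLinearMap.opNorm_le_bound _ (by positivity) fun w => ?_
  calc ‖q * (vmap q v ⬝ᵥ w)‖ = q * ‖vmap q v ⬝ᵥ w‖ := by rw [norm_mul, Real.norm_of_nonneg hq0.le]
    _ ≤ q * (d * ‖vmap q v‖ * ‖w‖) := by gcongr; exact norm_dotProduct_le _ _
    _ ≤ q * (d * ‖v‖ ^ (q - 1) * ‖w‖) := by gcongr; exact norm_vmap_le hq v
    _ = q * d * ‖v‖ ^ (q - 1) * ‖w‖ := by ring

end DualityMap

section Integrability

variable {Ω : Type*} {m0 : MeasurableSpace Ω} {μ : Measure Ω} {d : ℕ} {p q : ℝ}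

lemma integrable_norm_rpow_iff_memLp_ofReal {E : Type*} [NormedAddCommGroup E] {g : Ω → E}
    (hg : AEStronglyMeasurable g μ) (hp : 0 < p) :
    Integrable (fun x => ‖g x‖ ^ p) μ ↔ MemLp g (ENNReal.ofReal p) μ := by
  simpa only [ENNReal.toReal_ofReal hp.le] using
    integrable_norm_rpow_iff hg (ENNReal.ofReal_pos.2 hp).ne' ENNReal.ofReal_ne_top

lemma memLp_norm_rpow_sub_one (hpq : p.HolderConjugate q) {E : Type*} [NormedAddCommGroup E]
    {g : Ω → E} (hg : MemLp g (ENNReal.ofReal p) μ) :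
    MemLp (fun x => ‖g x‖ ^ (p - 1)) (ENNReal.ofReal q) μ := by
  rw [hpq.conjugate_eq, ENNReal.ofReal_div_of_pos hpq.sub_one_pos]
  simpa only [ENNReal.toReal_ofReal hpq.sub_one_pos.le] using
    hg.norm_rpow_div (ENNReal.ofReal (p - 1))

lemma integrable_lpnorm_rpow_iff (hq : 0 < q) {v : Ω → Fin d → ℝ}
    (hv : AEStronglyMeasurable v μ) :
    Integrable (fun x => lpnorm q (v x) ^ q) μ ↔ MemLp v (ENNReal.ofReal q) μ := by
  have hvi (i : Fin d) : AEStronglyMeasurable (fun x => v x i) μ :=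
    (continuous_apply i).comp_aestronglyMeasurable hv
  simp only [lpnorm_rpow hq.ne']
  refine ⟨fun h => MemLp.of_eval fun i => ?_, fun h => integrable_finsetSum _ fun i _ =>
    (integrable_norm_rpow_iff_memLp_ofReal (hvi i) hq).2 (h.eval i)⟩
  refine (integrable_norm_rpow_iff_memLp_ofReal (hvi i) hq).1 <|
    h.mono' ((hvi i).norm.aemeasurable.pow_const q).aestronglyMeasurable (ae_of_all _ fun x => ?_)
  rw [Real.norm_of_nonneg (Real.rpow_nonneg (norm_nonneg _) _)]
  exact Finset.single_le_sum (f := fun i => |v x i| ^ q)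
    (fun _ _ => Real.rpow_nonneg (abs_nonneg _) _) (Finset.mem_univ i)

lemma memLp_vmap (hpq : p.HolderConjugate q) {v : Ω → Fin d → ℝ}
    (hv : MemLp v (ENNReal.ofReal q) μ) :
    MemLp (fun x => vmap q (v x)) (ENNReal.ofReal p) μ := by
  have hm : AEStronglyMeasurable (fun x => vmap q (v x)) μ :=
    ((measurable_vmap q).comp_aemeasurable hv.aemeasurable).aestronglyMeasurable
  rw [← integrable_lpnorm_rpow_iff hpq.pos hm]
  simpa only [lpnorm_vmap_rpow hpq] using
    (integrable_lpnorm_rpow_iff hpq.symm.pos hv.aestronglyMeasurable).2 hv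

lemma integrable_dotProduct (hpq : p.HolderConjugate q) {v w : Ω → Fin d → ℝ}
    (hv : MemLp v (ENNReal.ofReal p) μ) (hw : MemLp w (ENNReal.ofReal q) μ) :
    Integrable (fun x => v x ⬝ᵥ w x) μ := by
  have := hpq.ennrealOfReal
  exact integrable_finsetSum _ fun i _ => (hv.eval i).integrable_mul (hw.eval i)

lemma integral_condExp_dotProduct {m : MeasurableSpace Ω} (hm : m ≤ m0) [SigmaFinite (μ.trim hm)]
    {v w : Ω → Fin d → ℝ} (hv : Integrable v μ) (hw : StronglyMeasurable[m] w)
    (hvw : Integrable (fun x => v x ⬝ᵥ w x) μ) :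
    ∫ x, (μ[v | m]) x ⬝ᵥ w x ∂μ = ∫ x, v x ⬝ᵥ w x ∂μ := by
  let B : (Fin d → ℝ) →L[ℝ] (Fin d → ℝ) →L[ℝ] ℝ := (dotProductBilin ℝ ℝ).toContinuousBilinearMap
  have hpull : μ[fun x => v x ⬝ᵥ w x | m] =ᵐ[μ] fun x => (μ[v | m]) x ⬝ᵥ w x :=
    condExp_bilin_of_stronglyMeasurable_right B hw hvw hv
  rw [← integral_congr_ae hpull, integral_condExp hm]

lemma condExp_map_ae_eq {Ω Ω' E : Type*} {m m0 : MeasurableSpace Ω} {m' m0' : MeasurableSpace Ω'}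
    {μ : Measure Ω} [IsFiniteMeasure μ] [NormedAddCommGroup E] [NormedSpace ℝ E] [CompleteSpace E]
    (hm : m ≤ m0) (hm' : m' ≤ m0') {Y : Ω → Ω'} (hY : Measurable Y) (hYm : Measurable[m, m'] Y)
    {g h : Ω' → E} (hg : Integrable g (μ.map Y)) (hh : StronglyMeasurable[m'] h)
    (hgh : μ[g ∘ Y | m] =ᵐ[μ] h ∘ Y) : (μ.map Y)[g | m'] =ᵐ[μ.map Y] h := by
  have hhm : AEStronglyMeasurable h (μ.map Y) := (hh.mono hm').aestronglyMeasurable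
  have hh_int : Integrable h (μ.map Y) :=
    (integrable_map_measure hhm hY.aemeasurable).2 (integrable_condExp.congr hgh)
  refine (ae_eq_condExp_of_forall_setIntegral_eq hm' hg (fun _ _ _ => hh_int.integrableOn)
    (fun s hs _ => ?_) hh.aestronglyMeasurable).symm
  rw [setIntegral_map (hm' s hs) hhm hY.aemeasurable,
    setIntegral_map (hm' s hs) hg.aestronglyMeasurable hY.aemeasurable]
  calc ∫ x in Y ⁻¹' s, h (Y x) ∂μ = ∫ x in Y ⁻¹' s, (μ[g ∘ Y | m]) x ∂μ :=
        integral_congr_ae (ae_restrict_of_ae hgh.symm)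
    _ = ∫ x in Y ⁻¹' s, g (Y x) ∂μ :=
        setIntegral_condExp hm
          ((integrable_map_measure hg.aestronglyMeasurable hY.aemeasurable).1 hg) (hYm hs)

lemma hasDerivAt_comp_add_smul_sub {E F : Type*} [NormedAddCommGroup E] [NormedSpace ℝ E]
    [NormedAddCommGroup F] [NormedSpace ℝ F] {f : E → F} (hf : Differentiable ℝ f) (x w : E)
    (t : ℝ) : HasDerivAt (fun t : ℝ => f (x + t • w) - f x) (fderiv ℝ f (x + t • w) w) t := by
  have hline : HasDerivAt (fun t : ℝ => x + t • w) w t := by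
    simpa using ((hasDerivAt_id t).smul_const w).const_add x
  exact ((hf _).hasFDerivAt.comp_hasDerivAt t hline).sub_const _

lemma norm_fderiv_add_smul_apply_le (hp : 1 < p) {E F : Type*} [NormedAddCommGroup E]
    [NormedSpace ℝ E] [NormedAddCommGroup F] [NormedSpace ℝ F] {f : E → F} {C : ℝ}
    (hgrow : ∀ x, ‖fderiv ℝ f x‖ ≤ C * (1 + ‖x‖ ^ (p - 1))) {t : ℝ} (ht : |t| ≤ 1) (x w : E) :
    ‖fderiv ℝ f (x + t • w) w‖ ≤ C * (1 + (‖x‖ + ‖w‖) ^ (p - 1)) * ‖w‖ := by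
  have hp1 : 0 < p - 1 := sub_pos.2 hp
  have hC : 0 ≤ C := by
    have h0 := (norm_nonneg _).trans (hgrow 0)
    rwa [norm_zero, Real.zero_rpow hp1.ne', add_zero, mul_one] at h0
  have hsum : ‖x + t • w‖ ≤ ‖x‖ + ‖w‖ := by
    refine (norm_add_le _ _).trans ?_
    gcongr
    rw [norm_smul]
    exact mul_le_of_le_one_left (norm_nonneg _) ht
  refine (ContinuousLinearMap.le_opNorm _ _).trans ?_
  gcongr
  refine (hgrow _).trans ?_
  gcongr

lemma hasDerivAt_integral_comp_add_smul_sub [IsFiniteMeasure μ] (hp : 1 < p) {E F : Type*}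
    [NormedAddCommGroup E] [NormedSpace ℝ E] [NormedAddCommGroup F] [NormedSpace ℝ F]
    {f : E → F} (hf : Differentiable ℝ f) {C : ℝ}
    (hgrow : ∀ x, ‖fderiv ℝ f x‖ ≤ C * (1 + ‖x‖ ^ (p - 1))) {X W : Ω → E}
    (hX : MemLp X (ENNReal.ofReal p) μ) (hW : MemLp W (ENNReal.ofReal p) μ) :
    HasDerivAt (fun t : ℝ => ∫ ω, (f (X ω + t • W ω) - f (X ω)) ∂μ)
      (∫ ω, fderiv ℝ f (X ω) (W ω) ∂μ) 0 := by
  have hpq := Real.HolderConjugate.conjExponent hp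
  have hmeas (t : ℝ) : AEStronglyMeasurable (fun ω => f (X ω + t • W ω) - f (X ω)) μ :=
    (hf.continuous.comp_aestronglyMeasurable
      (hX.aestronglyMeasurable.add (hW.aestronglyMeasurable.const_smul t))).sub
      (hf.continuous.comp_aestronglyMeasurable hX.aestronglyMeasurable)
  have hderiv_meas : AEStronglyMeasurable (fun ω => fderiv ℝ f (X ω + (0 : ℝ) • W ω) (W ω)) μ :=
    aestronglyMeasurable_of_tendsto_ae (𝓝[≠] (0 : ℝ))
      (fun t => ((hmeas (0 + t)).sub (hmeas 0)).const_smul t⁻¹)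
      (ae_of_all _ fun ω => (hasDerivAt_comp_add_smul_sub hf _ _ 0).tendsto_slope_zero)
  have hS : MemLp (fun ω => (‖X ω‖ + ‖W ω‖) ^ (p - 1)) (ENNReal.ofReal p.conjExponent) μ := by
    simpa only [Pi.add_apply, Real.norm_of_nonneg (add_nonneg (norm_nonneg _) (norm_nonneg _))]
      using memLp_norm_rpow_sub_one hpq (hX.norm.add hW.norm)
  have hbound_int : Integrable (fun ω => C * (1 + (‖X ω‖ + ‖W ω‖) ^ (p - 1)) * ‖W ω‖) μ := by
    have := hpq.symm.ennrealOfReal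
    exact (((memLp_const (1 : ℝ)).add hS).const_mul C).integrable_mul hW.norm
  simpa only [zero_smul, add_zero] using (hasDerivAt_integral_of_dominated_loc_of_deriv_le
    (Metric.ball_mem_nhds (0 : ℝ) one_pos) (Eventually.of_forall hmeas) (by simp) hderiv_meas
    (ae_of_all _ fun ω t ht =>
      norm_fderiv_add_smul_apply_le hp hgrow (mem_ball_zero_iff.1 ht).le (X ω) (W ω)) hbound_int
    (ae_of_all _ fun ω t _ => hasDerivAt_comp_add_smul_sub hf (X ω) (W ω) t)).2

end Integrability

section BestApproximation

variable {Ω : Type*} {m m0 : MeasurableSpace Ω} {μ : Measure Ω} {d : ℕ} {p q : ℝ}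

/-- `Z` is Birkhoff orthogonal, for the `L^q(μ; ℓ_q)` norm, to the `m`-measurable functions: it is
the residual of a best `L^q` approximation by such functions. -/
def IsBirkhoffOrthogonal (q : ℝ) (m : MeasurableSpace Ω) {_ : MeasurableSpace Ω} (μ : Measure Ω)
    (Z : Ω → Fin d → ℝ) : Prop :=
  ∀ g : Ω → Fin d → ℝ, Measurable[m] g → MemLp g (ENNReal.ofReal q) μ →
    ∫ x, lpnorm q (Z x) ^ q ∂μ ≤ ∫ x, lpnorm q (Z x + g x) ^ q ∂μ

variable [IsFiniteMeasure μ] {Z : Ω → Fin d → ℝ}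

lemma hasDerivAt_integral_lpnorm_rpow_add_smul (hq : 1 < q) {g : Ω → Fin d → ℝ}
    (hZ : MemLp Z (ENNReal.ofReal q) μ) (hg : MemLp g (ENNReal.ofReal q) μ) :
    HasDerivAt (fun t : ℝ => ∫ x, (lpnorm q (Z x + t • g x) ^ q - lpnorm q (Z x) ^ q) ∂μ)
      (q * ∫ x, vmap q (Z x) ⬝ᵥ g x ∂μ) 0 := by
  have hgrow (v : Fin d → ℝ) : ‖fderiv ℝ (fun v : Fin d → ℝ => lpnorm q v ^ q) v‖ ≤
      q * d * (1 + ‖v‖ ^ (q - 1)) := by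
    refine (norm_fderiv_lpnorm_rpow_le hq v).trans ?_
    gcongr
    linarith
  have hderiv := hasDerivAt_integral_comp_add_smul_sub hq
    (fun v => (hasFDerivAt_lpnorm_rpow hq v).differentiableAt) hgrow hZ hg
  simp only [(hasFDerivAt_lpnorm_rpow hq _).fderiv] at hderiv
  rw [← integral_const_mul]
  exact hderiv

namespace IsBirkhoffOrthogonal

lemma integral_vmap_dotProduct_eq_zero (h : IsBirkhoffOrthogonal q m μ Z) (hq : 1 < q)
    (hZ : MemLp Z (ENNReal.ofReal q) μ) {g : Ω → Fin d → ℝ} (hgm : Measurable[m] g)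
    (hg : MemLp g (ENNReal.ofReal q) μ) : ∫ x, vmap q (Z x) ⬝ᵥ g x ∂μ = 0 := by
  have hint {v : Ω → Fin d → ℝ} (hv : MemLp v (ENNReal.ofReal q) μ) :
      Integrable (fun x => lpnorm q (v x) ^ q) μ :=
    (integrable_lpnorm_rpow_iff (by linarith) hv.aestronglyMeasurable).2 hv
  have hmin : IsLocalMin
      (fun t : ℝ => ∫ x, (lpnorm q (Z x + t • g x) ^ q - lpnorm q (Z x) ^ q) ∂μ) 0 :=
    Eventually.of_forall fun t => by
      have htg : MemLp (fun x => t • g x) (ENNReal.ofReal q) μ := hg.const_smul t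
      simp only [zero_smul, add_zero, sub_self, integral_zero]
      rw [integral_sub (hint (v := fun x => Z x + t • g x) (hZ.add htg)) (hint hZ)]
      exact sub_nonneg.2 (h _ (hgm.const_smul t) htg)
  exact (mul_eq_zero.1 (hmin.hasDerivAt_eq_zero
    (hasDerivAt_integral_lpnorm_rpow_add_smul hq hZ hg))).resolve_left (by linarith)

theorem condExp_vmap_ae_eq_zero (h : IsBirkhoffOrthogonal q m μ Z) (hm : m ≤ m0)
    (hpq : p.HolderConjugate q) (hZ : MemLp Z (ENNReal.ofReal q) μ) :
    μ[fun x => vmap q (Z x) | m] =ᵐ[μ] 0 := by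
  have hint : Integrable (fun x => vmap q (Z x)) μ :=
    (memLp_vmap hpq hZ).integrable (by simpa using hpq.lt.le)
  refine (ae_eq_condExp_of_forall_setIntegral_eq hm hint (fun _ _ _ => integrableOn_zero)
    (fun s hs _ => ?_) aestronglyMeasurable_zero).symm
  simp only [integral_zero]
  ext j
  have hzero := h.integral_vmap_dotProduct_eq_zero hpq.symm.lt hZ
    (g := s.indicator fun _ => Pi.single j 1) (measurable_const.indicator hs)
    ((memLp_const _).indicator (hm s hs))
  have hind (x : Ω) : vmap q (Z x) ⬝ᵥ s.indicator (fun _ => Pi.single j 1) x =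
      s.indicator (fun x => vmap q (Z x) j) x := by
    by_cases hx : x ∈ s <;> simp [hx]
  simp only [hind] at hzero
  rw [integral_indicator (hm s hs)] at hzero
  rw [eval_integral fun i => (hint.eval i).integrableOn, hzero, Pi.zero_apply]

end IsBirkhoffOrthogonal

end BestApproximation

section Paths

variable {N d : ℕ} {p : ℝ}

lemma sum_Icc_one_eq_sum_fin {M : Type*} [AddCommMonoid M] (N : ℕ) (g : ℕ → M) :
    ∑ n ∈ Finset.Icc 1 N, g n = ∑ i : Fin N, g ((i : ℕ) + 1) := by
  rw [Fin.sum_univ_eq_sum_range (fun i => g (i + 1)), Finset.range_eq_Ico,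
    Finset.sum_Ico_add' g 0 N 1, zero_add, Finset.Ico_add_one_right_eq_Icc]

lemma coord_add (x y : PathD N d) (n : ℕ) : coord (x + y) n = coord x n + coord y n := by
  unfold coord
  split_ifs <;> simp

lemma coord_smul (c : ℝ) (x : PathD N d) (n : ℕ) : coord (c • x) n = c • coord x n := by
  unfold coord
  split_ifs <;> simp

lemma coord_DeltaInv (y : PathD N d) {n : ℕ} (hn : n ≤ N) :
    coord (DeltaInv y) n = ∑ k : Fin N, if (k : ℕ) + 1 ≤ n then y k else 0 := by
  rcases Nat.eq_zero_or_pos n with rfl | hpos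
  · simp [coord]
  · have hle (k : Fin N) : (k : ℕ) ≤ n - 1 ↔ (k : ℕ) + 1 ≤ n := by omega
    rw [coord, dif_pos ⟨hpos, hn⟩]
    simp only [DeltaInv, hle]

lemma coord_DeltaInv_succ_sub (y : PathD N d) (i : Fin N) :
    coord (DeltaInv y) ((i : ℕ) + 1) - coord (DeltaInv y) i = y i := by
  rw [coord_DeltaInv y i.2, coord_DeltaInv y i.2.le, ← Finset.sum_sub_distrib,
    Finset.sum_eq_single_of_mem i (Finset.mem_univ i) fun k _ hk => ?_]
  · simp
  · have hiff : (k : ℕ) + 1 ≤ i + 1 ↔ (k : ℕ) + 1 ≤ i := by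
      have : (k : ℕ) ≠ i := Fin.val_ne_of_ne hk
      omega
    simp only [hiff, sub_self]

lemma continuous_DeltaInv : Continuous (DeltaInv : PathD N d → PathD N d) := by
  refine continuous_pi fun i => continuous_finsetSum _ fun k _ => ?_
  split_ifs <;> fun_prop

lemma memLp_DeltaInv {Ω : Type*} {m0 : MeasurableSpace Ω} {μ : Measure Ω} {e : ℝ≥0∞}
    {Φ : Ω → PathD N d} (hΦ : MemLp Φ e μ) : MemLp (fun x => DeltaInv (Φ x)) e μ := by
  refine MemLp.of_eval fun i => memLp_finsetSum _ fun k _ => ?_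
  split_ifs
  exacts [hΦ.eval k, MemLp.zero]

/-- The perturbation `Id + c Δ^{-1} ∘ Φ` of the identity of path space, which adds `c • Φ x` to the
increments of the path `x`. -/
def shiftIncrements (c : ℝ) (Φ : PathD N d → PathD N d) (x : PathD N d) : PathD N d :=
  x + c • DeltaInv (Φ x)

lemma coord_shiftIncrements_succ (c : ℝ) (Φ : PathD N d → PathD N d) (x : PathD N d) (i : Fin N) :
    coord (shiftIncrements c Φ x) ((i : ℕ) + 1) =
      coord (shiftIncrements c Φ x) i - coord x i + coord x ((i : ℕ) + 1) + c • Φ x i := by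
  simp only [shiftIncrements, coord_add, coord_smul, ← coord_DeltaInv_succ_sub (Φ x) i, smul_sub]
  abel

lemma aemeasurable_shiftIncrements {μ : Measure (PathD N d)} {Φ : PathD N d → PathD N d}
    (hΦ : AEMeasurable Φ μ) (c : ℝ) : AEMeasurable (shiftIncrements c Φ) μ :=
  aemeasurable_id.add ((continuous_DeltaInv.measurable.comp_aemeasurable hΦ).const_smul c)

lemma cN_shiftIncrements (hp : p ≠ 0) (c : ℝ) (Φ : PathD N d → PathD N d) (x : PathD N d) :
    cN p x (shiftIncrements c Φ x) = |c| ^ p * ∑ i, lpnorm p (Φ x i) ^ p := by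
  rw [cN, sum_Icc_one_eq_sum_fin, Finset.mul_sum]
  refine Finset.sum_congr rfl fun i _ => ?_
  rw [Nat.add_sub_cancel, ← abs_neg, ← lpnorm_smul_rpow hp, coord_shiftIncrements_succ, neg_smul]
  congr 2
  abel

end Paths

section Filtration

variable {N d : ℕ}

lemma measurable_truncation (n : ℕ) :
    Measurable fun (x : PathD N d) (i : Fin N) => if (i : ℕ) + 1 ≤ n then x i else 0 := by
  refine measurable_pi_iff.2 fun i => ?_
  split_ifs <;> fun_prop

lemma Fn_le (n : ℕ) : Fn N d n ≤ (inferInstance : MeasurableSpace (PathD N d)) :=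
  (measurable_truncation n).comap_le

lemma measurable_Fn_apply {n : ℕ} {i : Fin N} (hi : (i : ℕ) + 1 ≤ n) :
    Measurable[Fn N d n] fun x : PathD N d => x i := by
  have htrunc := (measurable_pi_apply i).comp
    (comap_measurable (fun (x : PathD N d) (i : Fin N) => if (i : ℕ) + 1 ≤ n then x i else 0))
  simp only [Function.comp_def, if_pos hi] at htrunc
  exact htrunc

lemma measurable_Fn_iff {Ω : Type*} {m : MeasurableSpace Ω} {Y : Ω → PathD N d} {n : ℕ} :
    Measurable[m, Fn N d n] Y ↔
      ∀ i : Fin N, (i : ℕ) + 1 ≤ n → Measurable[m] fun ω => Y ω i := by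
  refine ⟨fun hY i hi => (measurable_Fn_apply hi).comp hY, fun hY =>
    measurable_comap_iff.2 (measurable_pi_iff.2 fun i => ?_)⟩
  by_cases hi : (i : ℕ) + 1 ≤ n
  · simpa only [Function.comp_def, if_pos hi] using hY i hi
  · simpa only [Function.comp_def, if_neg hi] using measurable_const

lemma Fn_mono {m n : ℕ} (hmn : m ≤ n) : Fn N d m ≤ Fn N d n :=
  fun _ hs => (measurable_Fn_iff (Y := id)).2 (fun _ hi => measurable_Fn_apply (hi.trans hmn)) hs

lemma measurable_Fn_coord (n : ℕ) : Measurable[Fn N d n] fun x : PathD N d => coord x n := by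
  unfold coord
  split_ifs with hn
  · exact measurable_Fn_apply (Nat.sub_add_cancel hn.1).le
  · exact measurable_const

lemma measurable_coord (n : ℕ) : Measurable fun x : PathD N d => coord x n :=
  (measurable_Fn_coord n).mono (Fn_le n) le_rfl

lemma measurable_Fn_shiftIncrements {Φ : PathD N d → PathD N d}
    (hΦ : ∀ i : Fin N, Measurable[Fn N d ((i : ℕ) + 1)] fun x => Φ x i) (c : ℝ) (n : ℕ) :
    Measurable[Fn N d n, Fn N d n] (shiftIncrements c Φ) := by
  refine measurable_Fn_iff.2 fun i hi => (measurable_Fn_apply hi).add (Measurable.const_smul ?_ c)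
  refine Finset.measurable_sum _ fun k _ => ?_
  split_ifs with hk
  · exact (hΦ k).mono (Fn_mono (by omega)) le_rfl
  · exact measurable_const

end Filtration

section Martingale

variable {N d : ℕ} {μ : Measure (PathD N d)}

lemma IsMartingaleMeasure.integrable_coord (hμ : IsMartingaleMeasure μ) {n : ℕ} (hn : n ≤ N) :
    Integrable (fun x => coord x n) μ := by
  rcases Nat.eq_zero_or_pos n with rfl | hpos
  · simp [coord]
  · exact (hμ n hpos hn).1

variable {Φ : PathD N d → PathD N d}

lemma IsMartingaleMeasure.integrable_coord_shiftIncrements (hμ : IsMartingaleMeasure μ)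
    (hint : ∀ i, Integrable (fun x => Φ x i) μ) (c : ℝ) {n : ℕ} (hn : n ≤ N) :
    Integrable (fun x => coord (shiftIncrements c Φ x) n) μ := by
  simp only [shiftIncrements, coord_add, coord_smul, coord_DeltaInv _ hn]
  refine (hμ.integrable_coord hn).add (Integrable.smul c (integrable_finsetSum _ fun k _ => ?_))
  split_ifs
  exacts [hint k, integrable_zero _ _ _]

variable [IsFiniteMeasure μ]

lemma IsMartingaleMeasure.condExp_coord_shiftIncrements (hμ : IsMartingaleMeasure μ)
    (hΦ : ∀ i : Fin N, Measurable[Fn N d ((i : ℕ) + 1)] fun x => Φ x i)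
    (hint : ∀ i, Integrable (fun x => Φ x i) μ)
    (hzero : ∀ i : Fin N, μ[fun x => Φ x i | Fn N d i] =ᵐ[μ] 0) (c : ℝ) (i : Fin N) :
    μ[fun x => coord (shiftIncrements c Φ x) ((i : ℕ) + 1) | Fn N d i] =ᵐ[μ]
      fun x => coord (shiftIncrements c Φ x) i := by
  let A : PathD N d → Fin d → ℝ := fun x => coord (shiftIncrements c Φ x) i - coord x i
  let B : PathD N d → Fin d → ℝ := fun x => coord x ((i : ℕ) + 1)
  have hdecomp : (fun x => coord (shiftIncrements c Φ x) ((i : ℕ) + 1)) =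
      A + B + c • fun x => Φ x i :=
    funext fun x => coord_shiftIncrements_succ c Φ x i
  have hA : Integrable A μ :=
    (hμ.integrable_coord_shiftIncrements hint c i.2.le).sub (hμ.integrable_coord i.2.le)
  have hB : Integrable B μ := hμ.integrable_coord i.2
  have hAmeas : StronglyMeasurable[Fn N d i] A :=
    (((measurable_Fn_coord _).comp (measurable_Fn_shiftIncrements hΦ c i)).sub
      (measurable_Fn_coord _)).stronglyMeasurable
  have hcondA : μ[A | Fn N d i] = A := condExp_of_stronglyMeasurable (Fn_le _) hAmeas hA
  have hcondB : μ[B | Fn N d i] =ᵐ[μ] fun x => coord x i := (hμ _ (Nat.le_add_left 1 i) i.2).2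
  rw [hdecomp]
  filter_upwards [condExp_add (hA.add hB) ((hint i).smul c) (Fn N d i),
    condExp_add hA hB (Fn N d i), condExp_smul c (fun x => Φ x i) (Fn N d i),
    hcondB, hzero i] with x hsum hsum' hsmul hB' hΦ'
  rw [hsum, Pi.add_apply, hsum', Pi.add_apply, hsmul, Pi.smul_apply, hcondA, hB', hΦ',
    Pi.zero_apply, smul_zero, add_zero, sub_add_cancel]

theorem IsMartingaleMeasure.map_shiftIncrements (hμ : IsMartingaleMeasure μ)
    (hΦ : ∀ i : Fin N, Measurable[Fn N d ((i : ℕ) + 1)] fun x => Φ x i)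
    (hint : ∀ i, Integrable (fun x => Φ x i) μ)
    (hzero : ∀ i : Fin N, μ[fun x => Φ x i | Fn N d i] =ᵐ[μ] 0) (c : ℝ) :
    IsMartingaleMeasure (μ.map (shiftIncrements c Φ)) := by
  have hY : Measurable (shiftIncrements c Φ) := measurable_pi_iff.2 fun i =>
    ((measurable_Fn_apply le_rfl).comp
      (measurable_Fn_shiftIncrements hΦ c ((i : ℕ) + 1))).mono (Fn_le _) le_rfl
  intro n hn1 hnN
  obtain ⟨i, rfl⟩ : ∃ i : Fin N, (i : ℕ) + 1 = n := ⟨⟨n - 1, by omega⟩, Nat.sub_add_cancel hn1⟩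
  have hint_map : Integrable (fun x => coord x ((i : ℕ) + 1)) (μ.map (shiftIncrements c Φ)) :=
    (integrable_map_measure (measurable_coord _).aestronglyMeasurable hY.aemeasurable).2
      (hμ.integrable_coord_shiftIncrements hint c hnN)
  exact ⟨hint_map, condExp_map_ae_eq (Fn_le _) (Fn_le _) hY (measurable_Fn_shiftIncrements hΦ c _)
    hint_map (measurable_Fn_coord _).stronglyMeasurable
    (hμ.condExp_coord_shiftIncrements hΦ hint hzero c i)⟩

end Martingale

section Malliavin

variable {N d : ℕ} {f : PathD N d → ℝ} {p q : ℝ}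

lemma Dn_dotProduct (f : PathD N d → ℝ) (n : ℕ) (x : PathD N d) (w : Fin d → ℝ) :
    Dn f n x ⬝ᵥ w = fderiv ℝ f x fun k : Fin N => if n ≤ (k : ℕ) + 1 then w else 0 := by
  have hbasis : (fun k : Fin N => if n ≤ (k : ℕ) + 1 then w else 0) =
      ∑ j, w j • ∑ k : Fin N, if n ≤ (k : ℕ) + 1 then Pi.single k (Pi.single j 1) else 0 := by
    ext k l
    simp only [Finset.sum_apply, Pi.smul_apply, smul_eq_mul]
    rw [Finset.sum_eq_single_of_mem l (Finset.mem_univ l),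
      Finset.sum_eq_single_of_mem k (Finset.mem_univ k)]
    · split_ifs <;> simp
    · intro i _ hi
      split_ifs <;> simp [hi.symm]
    · intro j _ hj
      refine mul_eq_zero_of_right _ (Finset.sum_eq_zero fun i _ => ?_)
      split_ifs <;> simp [Pi.single_apply, ite_apply, hj.symm]
  simp only [hbasis, map_sum, map_smul, apply_ite (fderiv ℝ f x), map_zero, dotProduct, Dn,
    smul_eq_mul, mul_comm]

lemma fderiv_DeltaInv (f : PathD N d → ℝ) (x y : PathD N d) :
    fderiv ℝ f x (DeltaInv y) = ∑ i : Fin N, Dn f ((i : ℕ) + 1) x ⬝ᵥ y i := by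
  have hsum : DeltaInv y =
      ∑ i : Fin N, fun k : Fin N => if (i : ℕ) + 1 ≤ (k : ℕ) + 1 then y i else 0 := by
    ext k
    simp only [DeltaInv, Finset.sum_apply, Nat.add_le_add_iff_right]
  simp only [hsum, map_sum, Dn_dotProduct]

lemma norm_fderiv_le_of_norm_Dn_le {x : PathD N d} {M : ℝ} (hM : ∀ n, ‖Dn f n x‖ ≤ M) :
    ‖fderiv ℝ f x‖ ≤ 2 * N * d * M := by
  have hM0 : 0 ≤ M := (norm_nonneg _).trans (hM 0)
  have hdot (n : ℕ) (w : Fin d → ℝ) : ‖Dn f n x ⬝ᵥ w‖ ≤ d * M * ‖w‖ :=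
    (norm_dotProduct_le _ _).trans (by gcongr; exact hM n)
  have hsingle (k : Fin N) (w : Fin d → ℝ) : fderiv ℝ f x (Pi.single k w) =
      Dn f ((k : ℕ) + 1) x ⬝ᵥ w - Dn f ((k : ℕ) + 2) x ⬝ᵥ w := by
    rw [Dn_dotProduct, Dn_dotProduct, ← map_sub]
    congr 1
    funext l
    rcases eq_or_ne l k with rfl | hlk
    · simp
    · have hiff : (k : ℕ) + 1 ≤ l + 1 ↔ (k : ℕ) + 2 ≤ l + 1 := by
        have : (l : ℕ) ≠ k := Fin.val_ne_of_ne hlk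
        omega
      simp only [Pi.single_eq_of_ne hlk, Pi.sub_apply, hiff, sub_self]
  refine ContinuousLinearMap.opNorm_le_bound _ (by positivity) fun z => ?_
  calc ‖fderiv ℝ f x z‖ = ‖∑ k, fderiv ℝ f x (Pi.single k (z k))‖ := by
        rw [← map_sum, Finset.univ_sum_single]
    _ ≤ ∑ _k : Fin N, (d * M * ‖z‖ + d * M * ‖z‖) := norm_sum_le_of_le _ fun k _ => by
        rw [hsingle]
        refine (norm_sub_le _ _).trans (add_le_add ?_ ?_) <;>
        · refine (hdot _ _).trans ?_
          gcongr
          exact norm_le_pi_norm z k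
    _ = 2 * N * d * M * ‖z‖ := by
        rw [Finset.sum_const, Finset.card_univ, Fintype.card_fin, nsmul_eq_mul]
        ring

lemma measurable_Dn (f : PathD N d → ℝ) (n : ℕ) : Measurable (Dn f n) := by
  refine measurable_pi_iff.2 fun j => Finset.measurable_sum _ fun k _ => ?_
  split_ifs
  exacts [measurable_fderiv_apply_const ℝ f _, measurable_const]

variable {μ : Measure (PathD N d)} [IsFiniteMeasure μ]

lemma memLp_Dn (hpq : p.HolderConjugate q) (hX : MemLp id (ENNReal.ofReal p) μ) {n : ℕ} {C : ℝ}
    (hgrow : ∀ x, ‖Dn f n x‖ ≤ C * (1 + ‖x‖ ^ (p - 1))) :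
    MemLp (Dn f n) (ENNReal.ofReal q) μ :=
  (((memLp_const (1 : ℝ)).add (memLp_norm_rpow_sub_one hpq hX)).const_mul C).mono'
    (measurable_Dn f n).aestronglyMeasurable (ae_of_all _ hgrow)

lemma hasDerivAt_integral_shiftIncrements (hpq : p.HolderConjugate q)
    (hX : MemLp id (ENNReal.ofReal p) μ) (hf : Differentiable ℝ f) {C : ℝ}
    (hgrow : ∀ n x, ‖Dn f n x‖ ≤ C * (1 + ‖x‖ ^ (p - 1))) {Φ : PathD N d → PathD N d}
    (hΦ : MemLp Φ (ENNReal.ofReal p) μ) :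
    HasDerivAt (fun c : ℝ => ∫ x, (f (shiftIncrements c Φ x) - f x) ∂μ)
      (∑ i : Fin N, ∫ x, Dn f ((i : ℕ) + 1) x ⬝ᵥ Φ x i ∂μ) 0 := by
  have hgrow' (x : PathD N d) : ‖fderiv ℝ f x‖ ≤ 2 * N * d * C * (1 + ‖x‖ ^ (p - 1)) := by
    rw [mul_assoc]
    exact norm_fderiv_le_of_norm_Dn_le fun n => hgrow n x
  have hderiv := hasDerivAt_integral_comp_add_smul_sub hpq.lt hf hgrow' hX (memLp_DeltaInv hΦ)
  simp only [fderiv_DeltaInv, id] at hderiv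
  rwa [integral_finsetSum _ fun i _ =>
    integrable_dotProduct hpq.symm (memLp_Dn hpq hX (hgrow _)) (hΦ.eval i)] at hderiv

end Malliavin

section PredictableProjection

variable {N d : ℕ} {p q : ℝ} {μ : Measure (PathD N d)}

/-- The norm `‖A‖_{L^q(μ)} = (Σ_{n=1}^N E_μ[|A_n|_*^q])^{1/q}` of a process. -/
noncomputable def processNorm (q : ℝ) (μ : Measure (PathD N d))
    (A : ℕ → PathD N d → Fin d → ℝ) : ℝ :=
  (∑ n ∈ Finset.Icc 1 N, ∫ x, lpnorm q (A n x) ^ q ∂μ) ^ (1 / q)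

lemma processNorm_rpow (hq : q ≠ 0) (A : ℕ → PathD N d → Fin d → ℝ) :
    processNorm q μ A ^ q = ∑ i : Fin N, ∫ x, lpnorm q (A ((i : ℕ) + 1) x) ^ q ∂μ := by
  rw [processNorm, ← Real.rpow_mul (Finset.sum_nonneg fun n _ => integral_nonneg fun x =>
    Real.rpow_nonneg (lpnorm_nonneg _ _) _), one_div_mul_cancel hq, Real.rpow_one,
    sum_Icc_one_eq_sum_fin]

/-- The optional projection `(ᵒD)_n = E_μ[D_n | F_n]` of a process. -/
noncomputable def optionalProjection (μ : Measure (PathD N d)) (D : ℕ → PathD N d → Fin d → ℝ) :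
    ℕ → PathD N d → Fin d → ℝ :=
  fun n => μ[D n | Fn N d n]

/-- `h` is a best approximation of the process `G` in `L^q(μ)` by predictable processes. -/
structure IsPredictableProjection (q : ℝ) (μ : Measure (PathD N d))
    (G h : ℕ → PathD N d → Fin d → ℝ) : Prop where
  predictable : IsPredictable h
  integrable : ∀ n : ℕ, 1 ≤ n → n ≤ N → Integrable (fun x => lpnorm q (h n x) ^ q) μ
  sum_integral_le : ∀ h' : ℕ → PathD N d → Fin d → ℝ, IsPredictable h' →
    (∀ n : ℕ, 1 ≤ n → n ≤ N → Integrable (fun x => lpnorm q (h' n x) ^ q) μ) →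
    ∑ n ∈ Finset.Icc 1 N, ∫ x, lpnorm q (G n x - h n x) ^ q ∂μ ≤
      ∑ n ∈ Finset.Icc 1 N, ∫ x, lpnorm q (G n x - h' n x) ^ q ∂μ

/-- The increments `Φ_n = v(G_n - h_n)` dual to the residual of an approximation of `G` by `h`,
where the coordinate `i : Fin N` carries the time `n = i + 1`. -/
noncomputable def dualResidual (q : ℝ) (G h : ℕ → PathD N d → Fin d → ℝ) (x : PathD N d) :
    PathD N d :=
  fun i => vmap q (G ((i : ℕ) + 1) x - h ((i : ℕ) + 1) x)

namespace IsPredictableProjection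

variable {G h : ℕ → PathD N d → Fin d → ℝ}

lemma measurable (hh : IsPredictableProjection q μ G h) (i : Fin N) :
    Measurable[Fn N d i] (h ((i : ℕ) + 1)) :=
  hh.predictable _ (Nat.le_add_left 1 i) i.2

lemma memLp (hh : IsPredictableProjection q μ G h) (hq : 0 < q) (i : Fin N) :
    MemLp (h ((i : ℕ) + 1)) (ENNReal.ofReal q) μ :=
  (integrable_lpnorm_rpow_iff hq ((hh.measurable i).mono (Fn_le _) le_rfl).aestronglyMeasurable).1
    (hh.integrable _ (Nat.le_add_left 1 i) i.2)

lemma isBirkhoffOrthogonal (hh : IsPredictableProjection q μ G h) (hq : 0 < q) (i : Fin N) :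
    IsBirkhoffOrthogonal q (Fn N d i) μ fun x => G ((i : ℕ) + 1) x - h ((i : ℕ) + 1) x := by
  intro g hgm hg
  let h' := Function.update h ((i : ℕ) + 1) fun x => h ((i : ℕ) + 1) x - g x
  have h'_self : h' ((i : ℕ) + 1) = fun x => h ((i : ℕ) + 1) x - g x := Function.update_self _ _ _
  have h'_of_ne {n : ℕ} (hn : n ≠ (i : ℕ) + 1) : h' n = h n := Function.update_of_ne hn _ _
  have hpred : IsPredictable h' := fun n hn1 hnN => by
    rcases eq_or_ne n ((i : ℕ) + 1) with rfl | hn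
    · rw [h'_self]
      exact (hh.measurable i).sub hgm
    · rw [h'_of_ne hn]
      exact hh.predictable n hn1 hnN
  have hint (n : ℕ) (hn1 : 1 ≤ n) (hnN : n ≤ N) :
      Integrable (fun x => lpnorm q (h' n x) ^ q) μ := by
    rcases eq_or_ne n ((i : ℕ) + 1) with rfl | hn
    · have hsub := (hh.memLp hq i).sub hg
      simp only [h'_self]
      exact (integrable_lpnorm_rpow_iff hq hsub.aestronglyMeasurable).2 hsub
    · simpa only [h'_of_ne hn] using hh.integrable n hn1 hnN
  have hle := hh.sum_integral_le h' hpred hint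
  have hi : (i : ℕ) + 1 ∈ Finset.Icc 1 N := Finset.mem_Icc.2 ⟨Nat.le_add_left 1 i, i.2⟩
  have hrest : ∑ n ∈ (Finset.Icc 1 N).erase ((i : ℕ) + 1),
      ∫ x, lpnorm q (G n x - h' n x) ^ q ∂μ =
        ∑ n ∈ (Finset.Icc 1 N).erase ((i : ℕ) + 1), ∫ x, lpnorm q (G n x - h n x) ^ q ∂μ :=
    Finset.sum_congr rfl fun n hn => by rw [h'_of_ne (Finset.ne_of_mem_erase hn)]
  rw [← Finset.add_sum_erase _ _ hi, ← Finset.add_sum_erase _ _ hi, hrest, h'_self] at hle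
  simpa only [sub_add] using le_of_add_le_add_right hle

lemma memLp_residual (hh : IsPredictableProjection q μ G h) (hq : 0 < q)
    {i : Fin N} (hG : MemLp (G ((i : ℕ) + 1)) (ENNReal.ofReal q) μ) :
    MemLp (fun x => G ((i : ℕ) + 1) x - h ((i : ℕ) + 1) x) (ENNReal.ofReal q) μ :=
  hG.sub (hh.memLp hq i)

lemma measurable_dualResidual (hh : IsPredictableProjection q μ G h) {i : Fin N}
    (hG : Measurable[Fn N d ((i : ℕ) + 1)] (G ((i : ℕ) + 1))) :
    Measurable[Fn N d ((i : ℕ) + 1)] fun x => dualResidual q G h x i :=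
  (measurable_vmap q).comp (hG.sub ((hh.measurable i).mono (Fn_mono (Nat.le_succ _)) le_rfl))

lemma memLp_dualResidual (hh : IsPredictableProjection q μ G h) (hpq : p.HolderConjugate q)
    (hG : ∀ i : Fin N, MemLp (G ((i : ℕ) + 1)) (ENNReal.ofReal q) μ) :
    MemLp (dualResidual q G h) (ENNReal.ofReal p) μ :=
  MemLp.of_eval fun i => memLp_vmap hpq (hh.memLp_residual hpq.symm.pos (hG i))

variable [IsFiniteMeasure μ]

lemma condExp_dualResidual_ae_eq_zero (hh : IsPredictableProjection q μ G h)
    (hpq : p.HolderConjugate q) {i : Fin N}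
    (hG : MemLp (G ((i : ℕ) + 1)) (ENNReal.ofReal q) μ) :
    μ[fun x => dualResidual q G h x i | Fn N d i] =ᵐ[μ] 0 :=
  (hh.isBirkhoffOrthogonal hpq.symm.pos i).condExp_vmap_ae_eq_zero (Fn_le _) hpq
    (hh.memLp_residual hpq.symm.pos hG)

lemma integral_dotProduct_dualResidual (hh : IsPredictableProjection q μ G h)
    (hpq : p.HolderConjugate q) {i : Fin N}
    (hG : MemLp (G ((i : ℕ) + 1)) (ENNReal.ofReal q) μ) :
    ∫ x, G ((i : ℕ) + 1) x ⬝ᵥ dualResidual q G h x i ∂μ =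
      ∫ x, lpnorm q (G ((i : ℕ) + 1) x - h ((i : ℕ) + 1) x) ^ q ∂μ := by
  have hZ := hh.memLp_residual hpq.symm.pos hG
  have hh_i := hh.memLp hpq.symm.pos i
  have horth : ∫ x, dualResidual q G h x i ⬝ᵥ h ((i : ℕ) + 1) x ∂μ = 0 :=
    (hh.isBirkhoffOrthogonal hpq.symm.pos i).integral_vmap_dotProduct_eq_zero hpq.symm.lt hZ
      (hh.measurable i) hh_i
  have hint : Integrable (fun x => dualResidual q G h x i ⬝ᵥ h ((i : ℕ) + 1) x) μ :=
    integrable_dotProduct hpq (memLp_vmap hpq hZ) hh_i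
  have hsplit (x : PathD N d) : G ((i : ℕ) + 1) x ⬝ᵥ dualResidual q G h x i =
      lpnorm q (G ((i : ℕ) + 1) x - h ((i : ℕ) + 1) x) ^ q +
        dualResidual q G h x i ⬝ᵥ h ((i : ℕ) + 1) x := by
    rw [← dotProduct_vmap_self hpq.symm.lt, dotProduct_comm (dualResidual q G h x i),
      dualResidual, ← add_dotProduct, sub_add_cancel]
  simp only [hsplit]
  rw [integral_add ((integrable_lpnorm_rpow_iff hpq.symm.pos hZ.aestronglyMeasurable).2 hZ) hint,
    horth, add_zero]

end IsPredictableProjection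

end PredictableProjection

section OptionalProjection

variable {N d : ℕ} {p q : ℝ} {μ : Measure (PathD N d)} {D h : ℕ → PathD N d → Fin d → ℝ}

lemma measurable_optionalProjection (D : ℕ → PathD N d → Fin d → ℝ) (n : ℕ) :
    Measurable[Fn N d n] (optionalProjection μ D n) :=
  stronglyMeasurable_condExp.measurable

lemma memLp_optionalProjection (hq : 1 ≤ q) {n : ℕ} (hD : MemLp (D n) (ENNReal.ofReal q) μ) :
    MemLp (optionalProjection μ D n) (ENNReal.ofReal q) μ :=
  hD.condExp (by simpa using hq)

lemma sum_integral_dotProduct_dualResidual_optionalProjection [IsFiniteMeasure μ]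
    (hpq : p.HolderConjugate q) (hD : ∀ n, MemLp (D n) (ENNReal.ofReal q) μ)
    (hh : IsPredictableProjection q μ (optionalProjection μ D) h) :
    ∑ i : Fin N, ∫ x, D ((i : ℕ) + 1) x ⬝ᵥ dualResidual q (optionalProjection μ D) h x i ∂μ =
      processNorm q μ (optionalProjection μ D - h) ^ q := by
  have hG (n : ℕ) : MemLp (optionalProjection μ D n) (ENNReal.ofReal q) μ :=
    memLp_optionalProjection hpq.symm.lt.le (hD n)
  have hΦ := hh.memLp_dualResidual hpq fun i => hG _
  rw [processNorm_rpow hpq.symm.ne_zero]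
  refine Finset.sum_congr rfl fun i _ => ?_
  calc ∫ x, D ((i : ℕ) + 1) x ⬝ᵥ dualResidual q (optionalProjection μ D) h x i ∂μ
      = ∫ x, optionalProjection μ D ((i : ℕ) + 1) x ⬝ᵥ
          dualResidual q (optionalProjection μ D) h x i ∂μ :=
        (integral_condExp_dotProduct (Fn_le _) ((hD _).integrable (by simpa using hpq.symm.lt.le))
          (hh.measurable_dualResidual (measurable_optionalProjection D _)).stronglyMeasurable
          (integrable_dotProduct hpq.symm (hD _) (hΦ.eval i))).symm
    _ = ∫ x, lpnorm q (optionalProjection μ D ((i : ℕ) + 1) x - h ((i : ℕ) + 1) x) ^ q ∂μ :=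
        hh.integral_dotProduct_dualResidual hpq (hG _)

end OptionalProjection

section Perturbation

variable {N d : ℕ} {p q : ℝ} {μ : Measure (PathD N d)} {f : PathD N d → ℝ}
  {Φ : PathD N d → PathD N d}

lemma map_snd_map_shiftIncrements (hΦ : AEMeasurable Φ μ) (c : ℝ) :
    (μ.map fun x => (x, shiftIncrements c Φ x)).map Prod.snd = μ.map (shiftIncrements c Φ) :=
  AEMeasurable.map_map_of_aemeasurable measurable_snd.aemeasurable
    (aemeasurable_id'.prodMk (aemeasurable_shiftIncrements hΦ c))

lemma integral_sub_map_shiftIncrements (hf : Continuous f) (hΦ : AEMeasurable Φ μ) (c : ℝ) :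
    ∫ z, (f z.2 - f z.1) ∂(μ.map fun x => (x, shiftIncrements c Φ x)) =
      ∫ x, (f (shiftIncrements c Φ x) - f x) ∂μ :=
  integral_map (aemeasurable_id'.prodMk (aemeasurable_shiftIncrements hΦ c))
    ((hf.comp continuous_snd).sub (hf.comp continuous_fst)).aestronglyMeasurable

lemma measurable_cN (p : ℝ) : Measurable fun z : PathD N d × PathD N d => cN p z.1 z.2 := by
  refine Finset.measurable_sum _ fun n _ => ((measurable_lpnorm p).comp ?_).pow_const p
  have hΔ : Measurable fun x : PathD N d => coord x n - coord x (n - 1) :=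
    (measurable_coord n).sub (measurable_coord (n - 1))
  exact (hΔ.comp measurable_fst).sub (hΔ.comp measurable_snd)

lemma costD_map_shiftIncrements (hp : 0 < p) (hΦ : MemLp Φ (ENNReal.ofReal p) μ) (c : ℝ) :
    costD p (μ.map fun x => (x, shiftIncrements c Φ x)) =
      |c| ^ p * ∑ i, ∫ x, lpnorm p (Φ x i) ^ p ∂μ := by
  rw [costD, integral_map (aemeasurable_id'.prodMk (aemeasurable_shiftIncrements hΦ.aemeasurable c))
    (measurable_cN p).aestronglyMeasurable]
  simp only [cN_shiftIncrements hp.ne']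
  rw [integral_const_mul, integral_finsetSum _ fun i _ =>
    (integrable_lpnorm_rpow_iff hp (hΦ.eval i).aestronglyMeasurable).2 (hΦ.eval i)]

lemma tendsto_integral_sub_map_shiftIncrements_div [IsFiniteMeasure μ]
    (hpq : p.HolderConjugate q) (hX : MemLp id (ENNReal.ofReal p) μ) (hf : Differentiable ℝ f)
    {C : ℝ} (hgrow : ∀ n x, ‖Dn f n x‖ ≤ C * (1 + ‖x‖ ^ (p - 1)))
    (hΦ : MemLp Φ (ENNReal.ofReal p) μ) (u : ℝ) :
    Tendsto
      (fun δ => (∫ z, (f z.2 - f z.1) ∂(μ.map fun x => (x, shiftIncrements (u * δ) Φ x))) / δ)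
      (𝓝[>] 0) (𝓝 (u * ∑ i : Fin N, ∫ x, Dn f ((i : ℕ) + 1) x ⬝ᵥ Φ x i ∂μ)) := by
  have hderiv := hasDerivAt_integral_shiftIncrements hpq hX hf hgrow hΦ
  have hscale : HasDerivAt (fun δ : ℝ => u * δ) u 0 := by
    simpa using (hasDerivAt_id (0 : ℝ)).const_mul u
  have hcomp := hderiv.comp_of_eq 0 hscale (mul_zero u).symm
  rw [mul_comm u]
  refine hcomp.tendsto_slope_zero_right.congr fun δ => ?_
  have hbase : ∫ x, (f (shiftIncrements (u * 0) Φ x) - f x) ∂μ = 0 := by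
    simp [shiftIncrements]
  rw [integral_sub_map_shiftIncrements hf.continuous hΦ.aemeasurable]
  simp only [Function.comp_apply, hbase, zero_add, sub_zero, smul_eq_mul, div_eq_inv_mul]

end Perturbation

theorem statement_14_general {N d : ℕ} {p q : ℝ} (hpq : p.HolderConjugate q)
    {μ : Measure (PathD N d)} [IsFiniteMeasure μ] (hmart : IsMartingaleMeasure μ)
    (hmom : Integrable (fun x : PathD N d => ‖x‖ ^ p) μ)
    {f : PathD N d → ℝ} (hf : Differentiable ℝ f) {C : ℝ}
    (hgrow : ∀ n x, lpnorm q (Dn f n x) ≤ C * (1 + ‖x‖ ^ (p - 1)))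
    {hstar : ℕ → PathD N d → Fin d → ℝ}
    (hproj : IsPredictableProjection q μ (optionalProjection μ (Dn f)) hstar)
    {ρ : ℝ} (hρ : ρ = processNorm q μ (optionalProjection μ (Dn f) - hstar)) (u : ℝ)
    {πδ : ℝ → Measure (PathD N d × PathD N d)}
    (hπδ : ∀ δ, πδ δ = μ.map fun x =>
      (x, shiftIncrements (u * δ) (dualResidual q (optionalProjection μ (Dn f)) hstar) x)) :
    (∀ n : ℕ, 1 ≤ n → n ≤ N →
      μ[fun x => vmap q (optionalProjection μ (Dn f) n x - hstar n x) | Fn N d (n - 1)]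
        =ᵐ[μ] 0) ∧
    (∀ δ : ℝ, IsMartingaleMeasure ((πδ δ).map Prod.snd)) ∧
    (∀ δ : ℝ, 0 < δ → costD p (πδ δ) = |u| ^ p * ρ ^ q * δ ^ p) ∧
    Tendsto (fun δ : ℝ => (∫ z, (f z.2 - f z.1) ∂(πδ δ)) / δ) (𝓝[>] 0) (𝓝 (u * ρ ^ q)) := by
  have hgrow' (n : ℕ) (x : PathD N d) : ‖Dn f n x‖ ≤ C * (1 + ‖x‖ ^ (p - 1)) :=
    (norm_le_lpnorm hpq.symm.pos _).trans (hgrow n x)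
  have hX : MemLp id (ENNReal.ofReal p) μ :=
    (integrable_norm_rpow_iff_memLp_ofReal aestronglyMeasurable_id hpq.pos).1 hmom
  have hD (n : ℕ) : MemLp (Dn f n) (ENNReal.ofReal q) μ := memLp_Dn hpq hX (hgrow' n)
  have hG (n : ℕ) := memLp_optionalProjection hpq.symm.lt.le (hD n)
  have hΦ := hproj.memLp_dualResidual hpq fun i => hG _
  have hzero (i : Fin N) := hproj.condExp_dualResidual_ae_eq_zero hpq (hG ((i : ℕ) + 1))
  refine ⟨fun n hn1 hnN => ?_, fun δ => ?_, fun δ hδ => ?_, ?_⟩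
  · obtain ⟨i, rfl⟩ : ∃ i : Fin N, (i : ℕ) + 1 = n := ⟨⟨n - 1, by omega⟩, Nat.sub_add_cancel hn1⟩
    exact hzero i
  · rw [hπδ, map_snd_map_shiftIncrements hΦ.aemeasurable]
    exact hmart.map_shiftIncrements
      (fun i => hproj.measurable_dualResidual (measurable_optionalProjection _ _))
      (fun i => (hΦ.eval i).integrable (by simpa using hpq.lt.le)) hzero _
  · rw [hπδ, costD_map_shiftIncrements hpq.pos hΦ, abs_mul, abs_of_pos hδ,
      Real.mul_rpow (abs_nonneg _) hδ.le, hρ, processNorm_rpow hpq.symm.ne_zero, mul_right_comm]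
    simp only [dualResidual, lpnorm_vmap_rpow hpq, Pi.sub_apply]
  · simp only [hπδ, hρ, ← sum_integral_dotProduct_dualResidual_optionalProjection hpq hD hproj]
    exact tendsto_integral_sub_map_shiftIncrements_div hpq hX hf hgrow' hΦ u

/-- First-order optimal martingale perturbations. With `h*` the predictable
`L^q`-projection of `ᵒ𝔻f`, `ρ = ‖ᵒ𝔻f − h*‖_{L^q(μ)}`, `Φ_n = v((ᵒ𝔻f)_n − h*_n)`, `u > 0`
and `π_δ = (Id, Id + uδ Δ^{-1}∘Φ)_# μ`:
(a) `E_μ[Φ_n | F_{n−1}] = 0` a.s. and the second marginal of `π_δ` is a martingale measure;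
(b) `E_{π_δ}[c_N(X,Y)] = u^p ρ^q δ^p`;
(c) `lim_{δ→0+} E_{π_δ}[f(Y) − f(X)]/δ = u ρ^q`. -/
theorem statement_14 {N d : ℕ} (p q : ℝ) (hp : 1 < p) (hq : q = p / (p - 1))
    (μ : Measure (PathD N d)) [IsProbabilityMeasure μ]
    (hmart : IsMartingaleMeasure μ)
    (hmom : Integrable (fun x : PathD N d => ‖x‖ ^ p) μ)
    (f : PathD N d → ℝ) (hf : ContDiff ℝ 1 f)
    (C : ℝ) (hgrow : ∀ n : ℕ, ∀ x : PathD N d,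
      lpnorm q (Dn f n x) ≤ C * (1 + ‖x‖ ^ (p - 1)))
    (hstar : ℕ → PathD N d → Fin d → ℝ)
    (hpred : IsPredictable hstar)
    (hstarint : ∀ n : ℕ, 1 ≤ n → n ≤ N → Integrable (fun x => lpnorm q (hstar n x) ^ q) μ)
    (hmin : ∀ h : ℕ → PathD N d → Fin d → ℝ, IsPredictable h →
      (∀ n : ℕ, 1 ≤ n → n ≤ N → Integrable (fun x => lpnorm q (h n x) ^ q) μ) →
      (∑ n ∈ Finset.Icc 1 N, ∫ x, lpnorm q ((μ[Dn f n | Fn N d n]) x - hstar n x) ^ q ∂μ) ≤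
        ∑ n ∈ Finset.Icc 1 N, ∫ x, lpnorm q ((μ[Dn f n | Fn N d n]) x - h n x) ^ q ∂μ)
    (ρ : ℝ)
    (hρ : ρ = (∑ n ∈ Finset.Icc 1 N,
      ∫ x, lpnorm q ((μ[Dn f n | Fn N d n]) x - hstar n x) ^ q ∂μ) ^ (1 / q))
    (u : ℝ) (hu : 0 < u)
    (πδ : ℝ → Measure (PathD N d × PathD N d))
    (hπδ : ∀ δ : ℝ, πδ δ =
      μ.map (fun x => (x, x + (u * δ) • DeltaInv (fun i : Fin N =>
        vmap q ((μ[Dn f ((i : ℕ) + 1) | Fn N d ((i : ℕ) + 1)]) x - hstar ((i : ℕ) + 1) x))))) :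
    (∀ n : ℕ, 1 ≤ n → n ≤ N →
      (μ[(fun x => vmap q ((μ[Dn f n | Fn N d n]) x - hstar n x)) | Fn N d (n - 1)]) =ᵐ[μ] 0) ∧
    (∀ δ : ℝ, 0 < δ → IsMartingaleMeasure ((πδ δ).map Prod.snd)) ∧
    (∀ δ : ℝ, 0 < δ → costD p (πδ δ) = u ^ p * ρ ^ q * δ ^ p) ∧
    Tendsto (fun δ : ℝ => (∫ z, (f z.2 - f z.1) ∂(πδ δ)) / δ)
      (nhdsWithin 0 (Set.Ioi 0)) (nhds (u * ρ ^ q)) := by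
  obtain ⟨hzero, hmartδ, hcost, hlim⟩ := statement_14_general (hq ▸ .conjExponent hp) hmart hmom
    (hf.differentiable one_ne_zero) hgrow ⟨hpred, hstarint, hmin⟩ hρ u hπδ
  exact ⟨hzero, fun δ _ => hmartδ δ, by simpa only [abs_of_pos hu] using hcost, hlim⟩
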